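/- Let V = R^{2n+1} with orthonormal basis e_0, e_1, ..., e_{2n} and the standard orientation given by e^0 ∧ e^1 ∧ ... ∧ e^{2n}. For 0 ≤ i ≤ n let α_i = (1/(i!(n-i)!)) Σ_{σ ∈ S_n} sgn(σ) e^{σ(1)} ∧ ... ∧ e^{σ(i)} ∧ e^{n+σ(i+1)} ∧ ... ∧ e^{n+σ(n)}. Then the Hodge star satisfies *α_i = (-1)^i e^0 ∧ α_{n-i}. -/

import Mathlib

set_option synthInstance.maxHeartbeats 1000000

/-- The model for the dual basis covector `e^j` of `ℝ^m`, as a degree-one element of the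
exterior algebra of the dual space. -/
noncomputable def eD (m : ℕ) (j : Fin m) :
    ExteriorAlgebra ℝ (Module.Dual ℝ (Fin m → ℝ)) :=
  ExteriorAlgebra.ι ℝ ((Pi.basisFun ℝ (Fin m)).coord j)

/-- The basis monomial `e^{j_1} ∧ ⋯ ∧ e^{j_k}` indexed by a finite set `S = {j_1 < ⋯ < j_k}`. -/
noncomputable def eSet (m : ℕ) (S : Finset (Fin m)) :
    ExteriorAlgebra ℝ (Module.Dual ℝ (Fin m → ℝ)) :=
  ((S.sort (· ≤ ·)).map (eD m)).prod

/-- `H` is the Hodge star operator of `ℝ^m` with its standard inner product (for which the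
basis `e_0, …, e_{m-1}` is orthonormal) and the standard orientation `e^0 ∧ ⋯ ∧ e^{m-1}`:
it is linear and characterized on basis monomials by `H(e^S) ∈ ℝ·e^{Sᶜ}` together with the
defining property `e^S ∧ H(e^S) = vol`. -/
def IsHodgeStar (m : ℕ)
    (H : ExteriorAlgebra ℝ (Module.Dual ℝ (Fin m → ℝ)) →ₗ[ℝ]
      ExteriorAlgebra ℝ (Module.Dual ℝ (Fin m → ℝ))) : Prop :=
  ∀ S : Finset (Fin m),
    (∃ c : ℝ, H (eSet m S) = c • eSet m Sᶜ) ∧ eSet m S * H (eSet m S) = eSet m Finset.univ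

/-- The Griffiths `n`-form `α_i` on `ℝ^{2n+1}` with orthonormal basis `e_0, e_1, …, e_{2n}`:
`α_i = (1/(i!(n-i)!)) ∑_{σ ∈ S_n} sgn(σ) e^{σ(1)} ∧ ⋯ ∧ e^{σ(i)} ∧ e^{n+σ(i+1)} ∧ ⋯ ∧ e^{n+σ(n)}`. -/
noncomputable def alphaO (n i : ℕ) :
    ExteriorAlgebra ℝ (Module.Dual ℝ (Fin (n + n + 1) → ℝ)) :=
  ((i.factorial * (n - i).factorial : ℝ))⁻¹ •
    ∑ σ : Equiv.Perm (Fin n), (((Equiv.Perm.sign σ : ℤ) : ℝ)) •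
      (List.ofFn (fun k : Fin n =>
        if (k : ℕ) < i then eD (n + n + 1) ((Fin.castAdd n (σ k)).succ)
        else eD (n + n + 1) ((Fin.natAdd n (σ k)).succ))).prod

noncomputable def pL (m : ℕ) (L : List (Fin m)) :
    ExteriorAlgebra ℝ (Module.Dual ℝ (Fin m → ℝ)) := (L.map (eD m)).prod

lemma pL_nil (m : ℕ) : pL m [] = 1 := by simp [pL]

lemma pL_cons (m : ℕ) (x : Fin m) (L : List (Fin m)) : pL m (x :: L) = eD m x * pL m L := by
  simp [pL]

lemma pL_append (m : ℕ) (L L' : List (Fin m)) : pL m (L ++ L') = pL m L * pL m L' := by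
  simp [pL]

lemma eD_swap (m : ℕ) (x y : Fin m) : eD m x * eD m y = (-1 : ℝ) • (eD m y * eD m x) := by
  have h := ExteriorAlgebra.ι_add_mul_swap (R := ℝ) ((Pi.basisFun ℝ (Fin m)).coord x)
    ((Pi.basisFun ℝ (Fin m)).coord y)
  rw [neg_one_smul]
  exact eq_neg_of_add_eq_zero_left h

lemma eD_pL (m : ℕ) (x : Fin m) (L : List (Fin m)) :
    eD m x * pL m L = ((-1 : ℝ) ^ L.length) • (pL m L * eD m x) := by
  induction L with
  | nil => simp [pL_nil]
  | cons y L ih =>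
    rw [pL_cons, ← mul_assoc, eD_swap, smul_mul_assoc, mul_assoc, ih, mul_smul_comm, smul_smul,
      mul_assoc, List.length_cons, pow_succ, mul_comm]

lemma pL_comm (m : ℕ) (L L' : List (Fin m)) :
    pL m L * pL m L' = ((-1 : ℝ) ^ (L.length * L'.length)) • (pL m L' * pL m L) := by
  induction L with
  | nil => simp [pL_nil]
  | cons y L ih =>
    rw [pL_cons, mul_assoc, ih, mul_smul_comm, ← mul_assoc, eD_pL, smul_mul_assoc, smul_smul,
      mul_assoc, List.length_cons, ← pow_add, add_mul, one_mul]

lemma pL_perm {α : Type} {l l' : List α} (h : l.Perm l') :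
    ∃ s : ℝ, s * s = 1 ∧ ∀ (m : ℕ) (f : α → Fin m), pL m (l.map f) = s • pL m (l'.map f) := by
  induction h with
  | nil => exact ⟨1, by simp, by simp⟩
  | cons x _ ih =>
    obtain ⟨s, hs, h⟩ := ih
    refine ⟨s, hs, fun m f => ?_⟩
    rw [List.map_cons, List.map_cons, pL_cons, pL_cons, h, mul_smul_comm]
  | swap x y l =>
    refine ⟨-1, by simp, fun m f => ?_⟩
    simp only [List.map_cons, pL_cons]
    rw [← mul_assoc, eD_swap, smul_mul_assoc, mul_assoc]
  | trans _ _ ih1 ih2 =>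
    obtain ⟨s, hs, h⟩ := ih1
    obtain ⟨t, ht, h'⟩ := ih2
    refine ⟨s * t, by linear_combination t * t * hs + ht, fun m f => ?_⟩
    rw [h, h', smul_smul]

lemma eSet_univ_ne (m : ℕ) : eSet m Finset.univ ≠ 0 := by
  have h1 : eSet m Finset.univ =
      ExteriorAlgebra.ιMulti ℝ m (fun j => (Pi.basisFun ℝ (Fin m)).coord j) := by
    rw [ExteriorAlgebra.ιMulti_apply, eSet, Fin.sort_univ, List.ofFn_eq_map]
    rfl
  intro h0
  let B := (Pi.basisFun ℝ (Fin m)).dualBasis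
  have h2 := ExteriorAlgebra.liftAlternating_apply_ιMulti (R := ℝ)
    (Pi.single m B.det : ∀ i, (Module.Dual ℝ (Fin m → ℝ)) [⋀^Fin i]→ₗ[ℝ] ℝ)
    (fun j => (Pi.basisFun ℝ (Fin m)).coord j)
  rw [← h1, h0, map_zero, Pi.single_eq_same] at h2
  have h3 : (fun j => (Pi.basisFun ℝ (Fin m)).coord j) = B := by
    funext j
    simp [B]
  rw [h3, Module.Basis.det_self] at h2
  exact zero_ne_one h2

lemma hodge_list (m : ℕ)
    (H : ExteriorAlgebra ℝ (Module.Dual ℝ (Fin m → ℝ)) →ₗ[ℝ]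
      ExteriorAlgebra ℝ (Module.Dual ℝ (Fin m → ℝ))) (hH : IsHodgeStar m H)
    (L L' : List (Fin m)) (hp : (L ++ L').Perm (List.finRange m)) (s : ℝ) (hs : s * s = 1)
    (h : pL m L * pL m L' = s • eSet m Finset.univ) :
    H (pL m L) = s • pL m L' := by
  have hnd : (L ++ L').Nodup := hp.nodup_iff.2 (List.nodup_finRange m)
  have hmem : ∀ x, x ∈ L ++ L' := fun x => hp.mem_iff.2 (List.mem_finRange x)
  rw [List.nodup_append'] at hnd
  obtain ⟨n1, n2, hd⟩ := hnd
  have p1 : L.Perm (L.toFinset.sort (· ≤ ·)) :=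
    (List.perm_ext_iff_of_nodup n1 (Finset.sort_nodup _ _)).2 (by simp)
  have p2 : L'.Perm ((L.toFinset)ᶜ.sort (· ≤ ·)) :=
    (List.perm_ext_iff_of_nodup n2 (Finset.sort_nodup _ _)).2 (by
      intro x
      have := hmem x
      rw [List.mem_append] at this
      simp only [Finset.mem_sort, Finset.mem_compl, List.mem_toFinset]
      exact ⟨fun h1 h2 => hd h2 h1, fun h1 => this.resolve_left h1⟩)
  obtain ⟨a, ha, e1⟩ := pL_perm p1
  obtain ⟨b, hb, e2⟩ := pL_perm p2
  have e1 : pL m L = a • eSet m L.toFinset := by simpa [pL, eSet] using e1 m id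
  have e2 : pL m L' = b • eSet m (L.toFinset)ᶜ := by simpa [pL, eSet] using e2 m id
  obtain ⟨⟨c, hc⟩, hv⟩ := hH L.toFinset
  rw [hc, mul_smul_comm] at hv
  rw [e1, e2, smul_mul_smul_comm] at h
  have h4 : (a * b - c * s) • eSet m Finset.univ = 0 := by
    rw [sub_smul, sub_eq_zero, mul_smul c s, ← h, smul_smul, mul_comm c, mul_smul _ c, hv]
  have h5 : a * b - c * s = 0 := (smul_eq_zero.1 h4).resolve_right (eSet_univ_ne m)
  rw [e1, e2, map_smul, hc, smul_smul, smul_smul]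
  congr 1
  linear_combination (-a * s) * h5 + s * b * ha - a * c * hs

def iA (n : ℕ) (k : Fin n) : Fin (n + n + 1) := (Fin.castAdd n k).succ
def iB (n : ℕ) (k : Fin n) : Fin (n + n + 1) := (Fin.natAdd n k).succ

lemma finRange_split (n : ℕ) : List.finRange (n + n + 1) =
    0 :: ((List.finRange n).map (iA n) ++ (List.finRange n).map (iB n)) := by
  rw [List.finRange_succ, ← List.ofFn_id (n + n), List.ofFn_add, List.map_append,
    ← List.ofFn_eq_map, ← List.ofFn_eq_map, List.map_ofFn, List.map_ofFn]
  rfl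

lemma pL_main (n : ℕ) (l1 l2 : List (Fin n)) (hl : (l1 ++ l2).Perm (List.finRange n)) :
    pL (n + n + 1) (l1.map (iA n) ++ l2.map (iB n)) *
      pL (n + n + 1) (0 :: (l2.map (iA n) ++ l1.map (iB n))) =
    ((-1 : ℝ) ^ (l1.length + l1.length * l2.length)) • eSet (n + n + 1) Finset.univ := by
  obtain ⟨s, hs, h⟩ := pL_perm hl
  have hvol : eSet (n + n + 1) Finset.univ = eD _ 0 *
      (pL _ ((l1 ++ l2).map (iA n)) * pL _ ((l1 ++ l2).map (iB n))) := by
    rw [h, h, smul_mul_smul_comm, hs, one_smul, ← pL_append, ← pL_cons, ← finRange_split,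
      eSet, Fin.sort_univ, pL]
  rw [hvol]
  simp only [List.map_append, pL_append, pL_cons]
  have c1 := pL_comm (n + n + 1) (l1.map (iA n) ++ l2.map (iB n)) [0]
  have c2 := pL_comm (n + n + 1) (l2.map (iB n)) (l2.map (iA n))
  have c3 := pL_comm (n + n + 1) (l2.map (iB n)) (l1.map (iB n))
  simp only [List.length_map, List.length_append, pL_append, pL_cons, pL_nil, mul_one,
    List.length_singleton] at c1 c2 c3
  generalize pL _ (l1.map (iA n)) = A at *
  generalize pL _ (l2.map (iA n)) = C at *
  generalize pL _ (l1.map (iB n)) = D at *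
  generalize pL _ (l2.map (iB n)) = B at *
  generalize eD (n + n + 1) 0 = E at *
  generalize l1.length = p at *
  generalize l2.length = q at *
  have : A * B * (E * (C * D)) = (A * B * E) * C * D := by simp only [mul_assoc]
  rw [this, c1]
  have : E * (A * B) * C * D = E * (A * ((B * C) * D)) := by simp only [mul_assoc]
  rw [smul_mul_assoc, smul_mul_assoc, this, c2]
  have : (C * B) * D = C * (B * D) := by simp only [mul_assoc]
  rw [smul_mul_assoc, this, c3]
  simp only [mul_smul_comm, smul_smul, mul_assoc]
  congr 1
  rw [← pow_add, ← pow_add]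
  have e : p + q + (q * q + q * p) = p + p * q + q * (q + 1) := by ring
  rw [e, pow_add, (Nat.even_mul_succ_self q).neg_one_pow, mul_one]

lemma term_eq (n i : ℕ) (σ : Equiv.Perm (Fin n)) :
    (List.ofFn (fun k : Fin n =>
        if (k : ℕ) < i then eD (n + n + 1) ((Fin.castAdd n (σ k)).succ)
        else eD (n + n + 1) ((Fin.natAdd n (σ k)).succ))).prod =
    pL (n + n + 1) (((List.ofFn σ).take i).map (iA n) ++ ((List.ofFn σ).drop i).map (iB n)) := by
  rw [pL]
  congr 1
  apply List.ext_getElem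
  · simp; omega
  · intro k h1 h2
    simp only [List.length_ofFn] at h1
    simp only [List.getElem_ofFn, List.getElem_map, List.getElem_append, List.length_map,
      List.length_take, List.length_ofFn, List.getElem_take, List.getElem_drop, iA, iB]
    by_cases hk : k < i
    · have : k < min i n := by omega
      simp [hk, h1]
    · have : ¬ k < min i n := by omega
      have e : i + (k - min i n) = k := by omega
      simp [hk, e]

lemma finRotate_pow_val (n i : ℕ) (k : Fin n) : (((finRotate n) ^ i) k : ℕ) = (k + i) % n := by
  induction i with
  | zero => simp [Nat.mod_eq_of_lt k.2]
  | succ i ih =>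
    have := k.neZero
    rw [pow_succ', Equiv.Perm.mul_apply, finRotate_apply, Fin.val_add, ih]
    simp [← add_assoc]

lemma ofFn_rot (n i : ℕ) (σ : Equiv.Perm (Fin n)) :
    List.ofFn (σ * (finRotate n) ^ i : Equiv.Perm (Fin n)) = (List.ofFn σ).rotate i := by
  apply List.ext_getElem
  · simp
  · intro k h1 h2
    simp only [List.length_ofFn] at h1
    rw [List.getElem_rotate]
    simp only [List.getElem_ofFn, Equiv.Perm.mul_apply, List.length_ofFn]
    congr 1
    exact Fin.ext (finRotate_pow_val n i ⟨k, h1⟩)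

lemma sign_rot (n i : ℕ) (hi : i ≤ n) :
    (((Equiv.Perm.sign ((finRotate n) ^ i) : ℤˣ) : ℤ) : ℝ) = (-1) ^ (i * (n - i)) := by
  rw [map_pow, sign_finRotate, ← pow_mul]
  push_cast
  obtain ⟨d, rfl⟩ := Nat.exists_eq_add_of_le hi
  rw [Nat.add_sub_cancel_left]
  rcases i with _ | i
  · simp
  · have : (i + 1 + d - 1) * (i + 1) = (i + 1) * d + i * (i + 1) := by
      have : i + 1 + d - 1 = i + d := by omega
      rw [this]; ring
    rw [this, pow_add, (Nat.even_mul_succ_self i).neg_one_pow, mul_one]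

lemma hodge_term (n i : ℕ) (hi : i ≤ n)
    (H : ExteriorAlgebra ℝ (Module.Dual ℝ (Fin (n + n + 1) → ℝ)) →ₗ[ℝ]
      ExteriorAlgebra ℝ (Module.Dual ℝ (Fin (n + n + 1) → ℝ)))
    (hH : IsHodgeStar (n + n + 1) H) (l : List (Fin n)) (hl : l.Perm (List.finRange n)) :
    H (pL (n + n + 1) ((l.take i).map (iA n) ++ (l.drop i).map (iB n))) =
      ((-1 : ℝ) ^ (i + i * (n - i))) • (eD (n + n + 1) 0 *
        pL (n + n + 1) (((l.rotate i).take (n - i)).map (iA n) ++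
          ((l.rotate i).drop (n - i)).map (iB n))) := by
  have hlen : l.length = n := by simpa using hl.length_eq
  have hrot : l.rotate i = l.drop i ++ l.take i :=
    List.rotate_eq_drop_append_take (by omega)
  have hd : (l.drop i).length = n - i := by simp [hlen]
  have ht : (l.take i).length = i := by simp [hlen, hi]
  rw [hrot, List.take_left' hd, List.drop_left' hd]
  have hl' : (l.take i ++ l.drop i).Perm (List.finRange n) := by rwa [List.take_append_drop]
  have hm := pL_main n _ _ hl'
  rw [hd, ht] at hm
  rw [← pL_cons]
  refine hodge_list _ H hH _ _ ?_ _ ?_ hm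
  · rw [finRange_split]
    have hA := hl'.map (iA n)
    have hB := hl'.map (iB n)
    rw [List.map_append] at hA hB
    refine List.Perm.trans ?_ ((hA.append hB).cons 0)
    rw [← Multiset.coe_eq_coe]
    simp only [← Multiset.coe_add, ← Multiset.cons_coe, ← Multiset.singleton_add]
    abel
  · rw [← pow_add, ← two_mul, pow_mul]; simp

/-- on `ℝ^{2n+1}` with the standard orientation `e^0 ∧ e^1 ∧ ⋯ ∧ e^{2n}`,
the Hodge star satisfies `*α_i = (-1)^i e^0 ∧ α_{n-i}`. -/
theorem stmt3 (n i : ℕ) (hi : i ≤ n)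
    (H : ExteriorAlgebra ℝ (Module.Dual ℝ (Fin (n + n + 1) → ℝ)) →ₗ[ℝ]
      ExteriorAlgebra ℝ (Module.Dual ℝ (Fin (n + n + 1) → ℝ)))
    (hH : IsHodgeStar (n + n + 1) H) :
    H (alphaO n i) = ((-1 : ℝ) ^ i) • (eD (n + n + 1) 0 * alphaO n (n - i)) := by
  have hni : n - (n - i) = i := by omega
  unfold alphaO
  rw [hni, map_smul, map_sum, mul_smul_comm, smul_comm ((-1 : ℝ) ^ i),
    mul_comm (((n - i).factorial : ℝ))]
  congr 1
  conv_rhs => rw [← Equiv.sum_comp (Equiv.mulRight ((finRotate n) ^ i))]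
  rw [Finset.mul_sum, Finset.smul_sum]
  refine Finset.sum_congr rfl fun σ _ => ?_
  have hl : (List.ofFn σ).Perm (List.finRange n) :=
    (List.perm_ext_iff_of_nodup (List.nodup_ofFn.2 σ.injective) (List.nodup_finRange n)).2
      (fun x => by simpa [List.mem_ofFn] using σ.surjective x)
  rw [Equiv.coe_mulRight]
  beta_reduce
  rw [term_eq, term_eq, map_smul, hodge_term n i hi H hH _ hl, ofFn_rot,
    map_mul, Units.val_mul, Int.cast_mul, sign_rot n i hi, mul_smul_comm, smul_smul, smul_smul]
  congr 1
  rw [pow_add]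
  ring
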